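/- Let Q = 2n+2, m ≥ 1, 1 < p_j < ∞ for j = 1,…,m, and 1/p = Σ_j 1/p_j with p > 1. Then ∫_{(ℝ^{2n+1})^m} (∏_{j=1}^m |y_j|_h^{-Q/p_j}) / (max(1, |y₁|_h^Q, …, |y_m|_h^Q))^m dy₁⋯dy_m = m·p·Ω_Q^m / ∏_{j=1}^m (1 - 1/p_j). -/

import Mathlib

open MeasureTheory Real Finset

/-- The Heisenberg norm on ℝ^{2n+1}. -/
noncomputable def hNorm (n : ℕ) (x : Fin (2 * n + 1) → ℝ) : ℝ :=
  ((∑ i : Fin (2 * n), (x (Fin.castLE (by omega) i)) ^ 2) ^ 2 +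
      (x ⟨2 * n, by omega⟩) ^ 2) ^ ((1 : ℝ) / 4)

/-- The Heisenberg dilations on ℝ^{2n+1}: the first 2n coordinates are scaled by r,
the last by r². -/
def hDil (n : ℕ) (r : ℝ) (x : Fin (2 * n + 1) → ℝ) : Fin (2 * n + 1) → ℝ :=
  fun i => if (i : ℕ) < 2 * n then r * x i else r ^ 2 * x i

/-- The `Q`-th power of the Heisenberg norm. -/
noncomputable def hN (n : ℕ) (x : Fin (2 * n + 1) → ℝ) : ℝ := hNorm n x ^ (2 * n + 2 : ℝ)

theorem hNorm_nonneg (n : ℕ) (x : Fin (2 * n + 1) → ℝ) : 0 ≤ hNorm n x := by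
  unfold hNorm; positivity

theorem hN_nonneg (n : ℕ) (x : Fin (2 * n + 1) → ℝ) : 0 ≤ hN n x :=
  Real.rpow_nonneg (hNorm_nonneg n x) _

theorem measurable_hNorm (n : ℕ) : Measurable (hNorm n) := by
  unfold hNorm; fun_prop

theorem measurable_hN (n : ℕ) : Measurable (hN n) := by
  unfold hN
  exact (measurable_hNorm n).pow_const _

theorem hNorm_hDil (n : ℕ) {r : ℝ} (hr : 0 ≤ r) (x : Fin (2 * n + 1) → ℝ) :
    hNorm n (hDil n r x) = r * hNorm n x := by
  unfold hNorm hDil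
  have h1 : ∀ i : Fin (2 * n), ((Fin.castLE (by omega : 2 * n ≤ 2 * n + 1) i : Fin (2 * n + 1)) : ℕ)
      < 2 * n := fun i => by simp
  simp only [h1, if_true, lt_irrefl, if_false, mul_pow, ← Finset.mul_sum]
  rw [show (r ^ 2) ^ 2 = r ^ 4 by ring, ← mul_add, Real.mul_rpow (by positivity) (by positivity)]
  congr 1
  rw [← Real.rpow_natCast, ← Real.rpow_mul hr]
  norm_num

theorem hDil_vol (n : ℕ) {r : ℝ} (hr : 0 < r) (s : Set (Fin (2 * n + 1) → ℝ))
    (hs : MeasurableSet s) :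
    volume s = ENNReal.ofReal (r ^ (2 * n + 2)) * volume (hDil n r ⁻¹' s) := by
  set D : Fin (2 * n + 1) → ℝ := fun i => if (i : ℕ) < 2 * n then r else r ^ 2 with hD
  have hdet : (Matrix.diagonal D).det = r ^ (2 * n + 2) := by
    rw [Matrix.det_diagonal, Fin.prod_univ_castSucc]
    simp [hD, pow_add]
  have h := Real.smul_map_diagonal_volume_pi (D := D) (by rw [hdet]; positivity)
  have hfun : (Matrix.toLin' (Matrix.diagonal D) : (Fin (2 * n + 1) → ℝ) → _) = hDil n r := by
    ext x i
    simp only [Matrix.toLin'_apply, Matrix.mulVec_diagonal, hDil, hD]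
    split_ifs <;> rfl
  have hm : Measurable (hDil n r) := by
    rw [← hfun]; exact Continuous.measurable (LinearMap.continuous_on_pi _)
  rw [hdet, hfun, abs_of_pos (by positivity)] at h
  conv_lhs => rw [← h]
  rw [Measure.smul_apply, Measure.map_apply hm hs, smul_eq_mul]

theorem hN_vol (n : ℕ) {t : ℝ} (ht : 0 < t) :
    volume {x | hN n x < t} = ENNReal.ofReal t * volume {x | hNorm n x < 1} := by
  have hQ : (0 : ℝ) < 2 * n + 2 := by positivity
  set r : ℝ := t ^ (1 / (2 * n + 2 : ℝ)) with hr
  have hr0 : 0 < r := Real.rpow_pos_of_pos ht _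
  have hrt : r ^ (2 * n + 2 : ℝ) = t := by
    rw [hr, ← Real.rpow_mul ht.le, one_div_mul_cancel hQ.ne', Real.rpow_one]
  have hrt' : r ^ (2 * n + 2) = t := by
    rw [← hrt, ← Real.rpow_natCast]; push_cast; rfl
  rw [hDil_vol n hr0 _ (measurableSet_lt (measurable_hN n) measurable_const), hrt']
  congr 2
  ext x
  simp only [Set.mem_preimage, Set.mem_ofPred_eq, hN]
  rw [hNorm_hDil n hr0.le, ← hrt, Real.rpow_lt_rpow_iff (mul_nonneg hr0.le (hNorm_nonneg n x))
    hr0.le hQ]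
  constructor <;> intro h <;> nlinarith

theorem ball_fin (n : ℕ) : volume {x | hNorm n x < 1} ≠ ⊤ := by
  have hsub : {x | hNorm n x < 1} ⊆ Set.Icc (fun _ => (-1 : ℝ)) (fun _ => (1 : ℝ)) := by
    intro x hx
    simp only [Set.mem_ofPred_eq, hNorm] at hx
    have hx1 : (∑ i : Fin (2 * n), (x (Fin.castLE (by omega) i)) ^ 2) ^ 2 +
        (x ⟨2 * n, by omega⟩) ^ 2 < 1 := by
      by_contra h
      exact absurd hx (not_lt.2 (Real.one_le_rpow (not_lt.1 h) (by norm_num)))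
    have hkey : ∀ i, |x i| ≤ 1 := by
      intro i
      rw [← sq_le_one_iff_abs_le_one]
      refine Fin.lastCases ?_ (fun j => ?_) i
      · change (x ⟨2 * n, by omega⟩) ^ 2 ≤ 1
        nlinarith [sq_nonneg (∑ i : Fin (2 * n), (x (Fin.castLE (by omega) i)) ^ 2)]
      · have h1 : (x j.castSucc) ^ 2 ≤ ∑ i : Fin (2 * n), (x (Fin.castLE (by omega) i)) ^ 2 :=
          Finset.single_le_sum (f := fun i : Fin (2 * n) => (x (Fin.castLE (by omega) i)) ^ 2)
            (fun i _ => sq_nonneg _) (Finset.mem_univ j)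
        refine h1.trans ?_
        nlinarith [sq_nonneg (x ⟨2 * n, by omega⟩)]
    exact ⟨fun i => (abs_le.1 (hkey i)).1, fun i => (abs_le.1 (hkey i)).2⟩
  exact ((measure_mono hsub).trans_lt (isCompact_Icc.measure_lt_top)).ne

theorem hN_map (n : ℕ) :
    Measure.map (hN n) volume =
      volume {x | hNorm n x < 1} • (volume : Measure ℝ).restrict (Set.Ici 0) := by
  have hneg : ∀ t ≤ 0, {x | hN n x < t} = ∅ := by
    intro t ht
    ext x
    simpa using ht.trans (hN_nonneg n x)
  have hall : ∀ t, volume {x | hN n x < t} = ENNReal.ofReal t * volume {x | hNorm n x < 1} := by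
    intro t
    rcases le_or_gt t 0 with ht | ht
    · rw [hneg t ht, ENNReal.ofReal_of_nonpos ht]; simp
    · exact hN_vol n ht
  have hIco : ∀ ⦃a b : ℝ⦄, a < b → Measure.map (hN n) volume (Set.Ico a b) =
      (ENNReal.ofReal b - ENNReal.ofReal a) * volume {x | hNorm n x < 1} := by
    intro a b hab
    rw [Measure.map_apply (measurable_hN n) measurableSet_Ico]
    have : hN n ⁻¹' Set.Ico a b = {x | hN n x < b} \ {x | hN n x < a} := by
      ext x; simp [and_comm]
    have hsub : {x | hN n x < a} ⊆ {x | hN n x < b} := fun x hx => lt_trans hx hab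
    rw [this, measure_sdiff hsub
      (measurableSet_lt (measurable_hN n) measurable_const).nullMeasurableSet
      (by rw [hall]; exact ENNReal.mul_ne_top ENNReal.ofReal_ne_top (ball_fin n)), hall, hall,
      ENNReal.sub_mul (fun _ _ => ball_fin n)]
  refine Measure.ext_of_Ico' _ _ ?_ ?_
  · intro a b hab
    rw [hIco hab]
    exact ENNReal.mul_ne_top (by finiteness) (ball_fin n)
  · intro a b hab
    rw [hIco hab, Measure.smul_apply, Measure.restrict_apply measurableSet_Ico, smul_eq_mul,
      mul_comm]
    congr 1
    have : Set.Ico a b ∩ Set.Ici 0 = Set.Ico (max a 0) b := by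
      ext x; simp only [Set.mem_inter_iff, Set.mem_Ico, Set.mem_Ici, max_le_iff]; tauto
    rw [this, Real.volume_Ico]
    rcases le_or_gt a 0 with ha | ha
    · rw [max_eq_right ha, ENNReal.ofReal_of_nonpos ha]; simp
    · rw [max_eq_left ha.le, ENNReal.ofReal_sub _ ha.le]

/-- The truncated factor. -/
noncomputable def hG (n : ℕ) (a t : ℝ) (x : Fin (2 * n + 1) → ℝ) : ℝ :=
  if hN n x < t then hN n x ^ (-a) else 0

theorem hG_nonneg (n : ℕ) (a t : ℝ) (x : Fin (2 * n + 1) → ℝ) : 0 ≤ hG n a t x := by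
  unfold hG; split_ifs
  · exact Real.rpow_nonneg (hN_nonneg n x) _
  · exact le_rfl

theorem hG_int (n : ℕ) {a t : ℝ} (ha : a < 1) (ht : 0 < t) :
    Integrable (hG n a t) ∧ ∫ x, hG n a t x =
      (volume {x : Fin (2 * n + 1) → ℝ | hNorm n x < 1}).toReal * (t ^ (1 - a) / (1 - a)) := by
  set g : ℝ → ℝ := Set.indicator (Set.Iio t) (fun s => s ^ (-a)) with hg
  have hgm : Measurable g := (measurable_id.pow_const _).indicator measurableSet_Iio
  have hcomp : hG n a t = g ∘ hN n := by
    ext x; simp [hG, hg, Set.indicator_apply]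
  have hint : IntervalIntegrable (fun s : ℝ => s ^ (-a)) volume 0 t :=
    intervalIntegral.intervalIntegrable_rpow' (by linarith)
  have hset : Set.Iio t ∩ Set.Ici 0 = Set.Ico 0 t := by
    ext x; simp [and_comm]
  constructor
  · rw [hcomp, ← integrable_map_measure hgm.aestronglyMeasurable (measurable_hN n).aemeasurable,
      hN_map]
    refine Integrable.smul_measure ?_ (ball_fin n)
    rw [hg, integrable_indicator_iff measurableSet_Iio, IntegrableOn,
      Measure.restrict_restrict measurableSet_Iio, hset]
    exact (intervalIntegrable_iff_integrableOn_Ico_of_le ht.le).1 hint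
  · rw [hcomp]
    have := integral_map (measurable_hN n).aemeasurable
      (hgm.aestronglyMeasurable (μ := Measure.map (hN n) volume))
    simp only [Function.comp]
    rw [← this, hN_map, integral_smul_measure, hg, integral_indicator measurableSet_Iio,
      Measure.restrict_restrict measurableSet_Iio, hset, integral_Ico_eq_integral_Ioc,
      ← intervalIntegral.integral_of_le ht.le, integral_rpow (Or.inl (by linarith)),
      Real.zero_rpow (by linarith), smul_eq_mul, sub_zero, neg_add_eq_sub]

theorem layer (m : ℕ) (hm : 1 ≤ m) {M : ℝ} (hM : 1 ≤ M) {P : ℝ} (hP : 0 ≤ P) :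
    ∫⁻ t in Set.Ioi M, ENNReal.ofReal (P * (m * t ^ (-(m + 1) : ℝ))) =
      ENNReal.ofReal (P / M ^ m) := by
  have hm' : (1 : ℝ) ≤ m := by exact_mod_cast hm
  have hM0 : 0 < M := by linarith
  have hi := integrableOn_Ioi_rpow_of_lt (a := (-(m + 1) : ℝ)) (by linarith) hM0
  rw [← ofReal_integral_eq_lintegral_ofReal ((hi.const_mul _).const_mul _)]
  · rw [integral_const_mul, integral_const_mul, integral_Ioi_rpow_of_lt (by linarith) hM0]
    congr 1
    rw [show (-(m + 1) : ℝ) + 1 = -(m : ℝ) by ring, Real.rpow_neg hM0.le, Real.rpow_natCast]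
    field_simp
  · filter_upwards [ae_restrict_mem measurableSet_Ioi] with t ht
    have : 0 < t := hM0.trans ht
    positivity

/-- The m-linear Hardy–Littlewood–Pólya integral on the Heisenberg group:
∫ (∏ |y_j|^{-Q/p_j}) / max(1,|y₁|^Q,…,|y_m|^Q)^m = m·p·Ω_Q^m / ∏(1-1/p_j). -/
theorem hlp_integral (n m : ℕ) (hm : 1 ≤ m) (p : ℝ) (q : Fin m → ℝ)
    (hq : ∀ j, 1 < q j) (hp : 1 / p = ∑ j, 1 / q j) (hp1 : 1 < p) :
    ∫ y : Fin m → (Fin (2 * n + 1) → ℝ),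
        (∏ j, hNorm n (y j) ^ (-((2 * n + 2 : ℝ)) / q j)) /
          (max 1 (⨆ j, hNorm n (y j) ^ (2 * n + 2 : ℝ))) ^ m =
      m * p * (volume {x : Fin (2 * n + 1) → ℝ | hNorm n x < 1}).toReal ^ m /
        ∏ j, (1 - 1 / q j) := by
  have hQ : (0 : ℝ) < 2 * n + 2 := by positivity
  haveI : Nonempty (Fin m) := ⟨⟨0, hm⟩⟩
  set V := (volume {x : Fin (2 * n + 1) → ℝ | hNorm n x < 1}).toReal with hV
  have hV0 : 0 ≤ V := ENNReal.toReal_nonneg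
  set a : Fin m → ℝ := fun j => 1 / q j with ha
  have ha1 : ∀ j, a j < 1 := fun j => by
    rw [ha]; exact (div_lt_one (by linarith [hq j])).2 (hq j)
  have hp0 : 0 < p := by linarith
  set M : (Fin m → (Fin (2 * n + 1) → ℝ)) → ℝ := fun y => max 1 (⨆ j, hN n (y j)) with hMdef
  set P : (Fin m → (Fin (2 * n + 1) → ℝ)) → ℝ := fun y => ∏ j, hN n (y j) ^ (-a j) with hPdef
  have hPnn : ∀ y, 0 ≤ P y := fun y => Finset.prod_nonneg fun j _ =>
    Real.rpow_nonneg (hN_nonneg n _) _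
  have hM1 : ∀ y, 1 ≤ M y := fun y => le_max_left _ _
  have hMlt : ∀ y t, M y < t ↔ 1 < t ∧ ∀ j, hN n (y j) < t := by
    intro y t
    rw [hMdef]
    simp only [max_lt_iff]
    refine and_congr_right fun _ => ⟨fun h j => (le_ciSup (Set.finite_range _).bddAbove j).trans_lt h,
      fun h => ?_⟩
    obtain ⟨j, hj⟩ := exists_eq_ciSup_of_finite (f := fun j => hN n (y j))
    rw [← hj]; exact h j
  have hmeasN : ∀ j, Measurable fun y : Fin m → (Fin (2 * n + 1) → ℝ) => hN n (y j) := fun j =>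
    (measurable_hN n).comp (measurable_pi_apply j)
  have hMm : Measurable M := measurable_const.max (Measurable.iSup hmeasN)
  have hPm : Measurable P := Finset.measurable_prod _ fun j _ => (hmeasN j).pow_const _
  have hrew : ∀ y : Fin m → (Fin (2 * n + 1) → ℝ),
      (∏ j, hNorm n (y j) ^ (-((2 * n + 2 : ℝ)) / q j)) /
          (max 1 (⨆ j, hNorm n (y j) ^ (2 * n + 2 : ℝ))) ^ m = P y / M y ^ m := by
    intro y
    simp only [hPdef, hMdef, hN, ha]
    congr 1
    refine Finset.prod_congr rfl fun j _ => ?_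
    rw [← Real.rpow_mul (hNorm_nonneg n _)]
    congr 1; ring
  simp_rw [hrew]
  rw [integral_eq_lintegral_of_nonneg_ae
    (Filter.Eventually.of_forall fun y => div_nonneg (hPnn y) (pow_nonneg (by linarith [hM1 y]) _))
    (hPm.div (hMm.pow_const _)).aestronglyMeasurable]
  have hstep : ∀ y, ENNReal.ofReal (P y / M y ^ m) = ∫⁻ t in Set.Ioi (1 : ℝ),
      ENNReal.ofReal ((∏ j, hG n (a j) t (y j)) * (m * t ^ (-(m + 1) : ℝ))) := by
    intro y
    rw [← layer m hm (hM1 y) (hPnn y), ← lintegral_indicator measurableSet_Ioi,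
      ← lintegral_indicator measurableSet_Ioi]
    congr 1
    ext t
    simp only [Set.indicator_apply, Set.mem_Ioi, hMlt]
    by_cases h1 : 1 < t
    · by_cases h2 : ∀ j, hN n (y j) < t
      · simp [h1, h2, hG, hPdef]
      · rw [if_neg (fun h => h2 h.2), if_pos h1]
        push Not at h2
        obtain ⟨j, hj⟩ := h2
        rw [Finset.prod_eq_zero (Finset.mem_univ j) (by simp [hG, hj])]
        simp
    · simp [h1]
  simp_rw [hstep]
  rw [lintegral_lintegral_swap]
  swap
  · refine Measurable.aemeasurable ?_
    refine ENNReal.measurable_ofReal.comp (Measurable.mul (Finset.measurable_prod _ fun j _ => ?_) ?_)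
    · have h1 : Measurable fun z : (Fin m → (Fin (2 * n + 1) → ℝ)) × ℝ => hN n (z.1 j) :=
        (hmeasN j).comp measurable_fst
      exact Measurable.ite (measurableSet_lt h1 measurable_snd) (h1.pow_const _) measurable_const
    · exact (measurable_snd.pow_const _).const_mul _
  have hsum : ∑ j, a j = 1 / p := hp.symm
  have hprod : 0 < ∏ j, (1 - a j) := Finset.prod_pos fun j _ => by linarith [ha1 j]
  have hinner : ∀ t ∈ Set.Ioi (1 : ℝ), ∫⁻ y : Fin m → (Fin (2 * n + 1) → ℝ),
      ENNReal.ofReal ((∏ j, hG n (a j) t (y j)) * (m * t ^ (-(m + 1) : ℝ))) =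
      ENNReal.ofReal ((m * V ^ m / ∏ j, (1 - a j)) * t ^ (-1 - 1 / p)) := by
    intro t ht
    have ht0 : 0 < t := lt_trans one_pos ht
    have hi : Integrable fun y : Fin m → (Fin (2 * n + 1) → ℝ) => ∏ j, hG n (a j) t (y j) :=
      Integrable.fintype_prod fun j => (hG_int n (ha1 j) ht0).1
    rw [← ofReal_integral_eq_lintegral_ofReal (hi.mul_const _)]
    · congr 1
      rw [integral_mul_const, integral_fintype_prod_volume_eq_prod (fun j => hG n (a j) t)]
      simp_rw [fun j => (hG_int n (ha1 j) ht0).2]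
      rw [Finset.prod_mul_distrib, Finset.prod_div_distrib, Finset.prod_const,
        ← Real.rpow_sum_of_pos ht0, Finset.sum_sub_distrib, hsum]
      simp only [Finset.card_univ, Fintype.card_fin, Finset.sum_const, nsmul_eq_mul, mul_one]
      rw [show (-1 - 1 / p : ℝ) = (m - 1 / p) + (-(m + 1)) by ring, Real.rpow_add ht0]
      ring
    · exact Filter.Eventually.of_forall fun y => mul_nonneg
        (Finset.prod_nonneg fun j _ => hG_nonneg _ _ _ _) (by positivity)
  rw [setLIntegral_congr_fun measurableSet_Ioi hinner]
  have hlt : (-1 - 1 / p : ℝ) < -1 := by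
    have : 0 < 1 / p := by positivity
    linarith
  rw [← ofReal_integral_eq_lintegral_ofReal
    ((integrableOn_Ioi_rpow_of_lt hlt one_pos).const_mul _)]
  · rw [integral_const_mul, integral_Ioi_rpow_of_lt hlt one_pos, Real.one_rpow,
      show (-1 - 1 / p + 1 : ℝ) = -(1 / p) by ring, ENNReal.toReal_ofReal (by
        rw [neg_div_neg_eq]; positivity)]
    change _ = m * p * V ^ m / ∏ j, (1 - a j)
    field_simp
  · filter_upwards [ae_restrict_mem measurableSet_Ioi] with t ht
    have : 0 < t := lt_trans one_pos ht
    positivity
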